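/- arXiv:1606.02937 — 2 statements merged into one kernel-verified Lean document; each statement's English description precedes it below -/
import Mathlib

section
/- Let n ≥ 1 and let φ : ℝⁿ → ℂ be a nonzero Schwartz function (so that xφ ≠ 0). Then the following are equivalent: (i) n‖φ‖² = 2‖xφ‖‖∇φ‖; (ii) ‖∇φ‖ xφ = −‖xφ‖ ∇φ; (iii) there exists θ ∈ ℝ such that φ(x) = e^{iθ} (‖∇φ‖/(π‖xφ‖))^{n/4} ‖φ‖ exp(−(‖∇φ‖/‖xφ‖) |x|²/2) for all x ∈ ℝⁿ. -/
open MeasureTheory SchwartzMap LineDeriv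

namespace SchwartzMap

section InnerProduct

variable {E F : Type*} [NormedAddCommGroup E] [NormedSpace ℝ E] [FiniteDimensional ℝ E]
  [MeasurableSpace E] [BorelSpace E] [NormedAddCommGroup F] [InnerProductSpace ℝ F]
  {μ : Measure E} [μ.IsAddHaarMeasure]

theorem integrable_inner (f g : 𝓢(E, F)) : Integrable (fun x => inner ℝ (f x) (g x)) μ :=
  (pairing (innerSL ℝ) f g).integrable

theorem integrable_norm_sq (f : 𝓢(E, F)) : Integrable (fun x => ‖f x‖ ^ 2) μ := by
  simpa only [real_inner_self_eq_norm_sq] using integrable_inner f f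

theorem integral_norm_sq_eq_zero_iff (f : 𝓢(E, F)) : ∫ x, ‖f x‖ ^ 2 ∂μ = 0 ↔ f = 0 := by
  rw [integral_eq_zero_iff_of_nonneg (fun x => sq_nonneg _) f.integrable_norm_sq,
    Continuous.ae_eq_iff_eq (f := fun x => ‖f x‖ ^ 2) μ (f.continuous.norm.pow 2) continuous_zero]
  constructor
  · intro h
    ext x
    simpa using congrFun h x
  · rintro rfl
    ext x
    simp

theorem sum_integral_norm_sq_eq_zero_iff {ι : Type*} [Fintype ι] (f : ι → 𝓢(E, F)) :
    ∑ j, ∫ x, ‖f j x‖ ^ 2 ∂μ = 0 ↔ ∀ j, f j = 0 := by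
  rw [Finset.sum_eq_zero_iff_of_nonneg fun j _ => integral_nonneg fun x => sq_nonneg _]
  simp [integral_norm_sq_eq_zero_iff]

theorem integral_norm_smul_add_smul_sq (f g : 𝓢(E, F)) (a b : ℝ) :
    ∫ x, ‖(a • f + b • g) x‖ ^ 2 ∂μ =
      a ^ 2 * ∫ x, ‖f x‖ ^ 2 ∂μ + 2 * (a * b) * ∫ x, inner ℝ (f x) (g x) ∂μ
        + b ^ 2 * ∫ x, ‖g x‖ ^ 2 ∂μ := by
  rw [← integral_const_mul, ← integral_const_mul, ← integral_const_mul, ← integral_add,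
    ← integral_add]
  · refine integral_congr_ae (.of_forall fun x => ?_)
    simp only [add_apply, smul_apply, norm_add_sq_real, norm_smul, inner_smul_left,
      inner_smul_right, mul_pow, Real.norm_eq_abs, sq_abs, conj_trivial]
    ring
  · exact (f.integrable_norm_sq.const_mul _).add ((integrable_inner f g).const_mul _)
  · exact g.integrable_norm_sq.const_mul _
  · exact f.integrable_norm_sq.const_mul _
  · exact (integrable_inner f g).const_mul _

/-- The real part of the canonical commutation relation: `2 Re ⟨ℓ f, ∂ᵥ f⟩ = - ℓ(v) ‖f‖²`. -/
theorem two_mul_integral_inner_smulLeftCLM_lineDerivOp (ℓ : E →L[ℝ] ℝ) (v : E) (f : 𝓢(E, F)) :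
    2 * ∫ x, inner ℝ (smulLeftCLM F ℓ f x) (∂_{v} f x) ∂μ = -(ℓ v * ∫ x, ‖f x‖ ^ 2 ∂μ) := by
  have hderiv (x : E) : ∂_{v} (smulLeftCLM F ℓ f) x = ℓ v • f x + ℓ x • ∂_{v} f x := by
    have hfun : ⇑(smulLeftCLM F ℓ f) = ⇑ℓ • ⇑f :=
      funext fun x => smulLeftCLM_apply_apply ℓ.hasTemperateGrowth f x
    rw [lineDerivOp_apply_eq_fderiv, lineDerivOp_apply_eq_fderiv, hfun,
      (ℓ.hasFDerivAt.smul (f.hasFDerivAt x)).fderiv]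
    simp [add_comm]
  have hparts : ∫ x, inner ℝ (smulLeftCLM F ℓ f x) (∂_{v} f x) ∂μ =
      -∫ x, inner ℝ (∂_{v} (smulLeftCLM F ℓ f) x) (f x) ∂μ :=
    integral_bilinear_lineDerivOp_right_eq_neg_left (smulLeftCLM F ℓ f) f (innerSL ℝ) v
  simp only [hderiv] at hparts
  have hsplit : ∫ x, inner ℝ (ℓ v • f x + ℓ x • ∂_{v} f x) (f x) ∂μ =
      ℓ v * ∫ x, ‖f x‖ ^ 2 ∂μ + ∫ x, inner ℝ (smulLeftCLM F ℓ f x) (∂_{v} f x) ∂μ := by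
    rw [← integral_const_mul, ← integral_add (f.integrable_norm_sq.const_mul _)
      (integrable_inner _ _)]
    refine integral_congr_ae (.of_forall fun x => ?_)
    simp only [smulLeftCLM_apply_apply ℓ.hasTemperateGrowth, inner_add_left,
      real_inner_smul_left, real_inner_self_eq_norm_sq]
    rw [real_inner_comm]
  linarith

end InnerProduct

end SchwartzMap

section Gaussian

variable {V F : Type*} [NormedAddCommGroup V] [InnerProductSpace ℝ V]
  [NormedAddCommGroup F] [NormedSpace ℝ F]

theorem hasFDerivAt_exp_mul_norm_sq (a : ℝ) (x : V) :
    HasFDerivAt (fun y : V => Real.exp (a * ‖y‖ ^ 2 / 2))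
      ((Real.exp (a * ‖x‖ ^ 2 / 2) * a) • innerSL ℝ x) x := by
  convert! (((hasStrictFDerivAt_norm_sq x).hasFDerivAt.const_mul a).mul_const (2⁻¹ : ℝ)).exp
    using 1
  ext y
  simp
  ring_nf

/-- A solution of `∇f = -a x f` is a Gaussian. -/
theorem eq_exp_smul_of_fderiv_eq {f : V → F} {a : ℝ} (hf : Differentiable ℝ f)
    (h : ∀ x v, fderiv ℝ f x v = -(a * inner ℝ x v) • f x) (x : V) :
    f x = Real.exp (-a * ‖x‖ ^ 2 / 2) • f 0 := by
  have hd (y : V) : HasFDerivAt (fun y => Real.exp (a * ‖y‖ ^ 2 / 2) • f y) (0 : V →L[ℝ] F) y := by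
    convert! (hasFDerivAt_exp_mul_norm_sq a y).smul (hf y).hasFDerivAt using 1
    ext v
    simp [h, smul_smul, mul_assoc]
  have hconst := is_const_of_fderiv_eq_zero (𝕜 := ℝ) (fun y => (hd y).differentiableAt)
    (fun y => (hd y).fderiv) x 0
  simp only [norm_zero, ne_eq, OfNat.ofNat_ne_zero, not_false_eq_true, zero_pow, mul_zero,
    zero_div, Real.exp_zero, one_smul] at hconst
  rw [← hconst, smul_smul, ← Real.exp_add]
  ring_nf
  simp

theorem fderiv_eq_of_eq_exp_smul {f : V → F} {a : ℝ} {c : F}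
    (h : ∀ x, f x = Real.exp (-a * ‖x‖ ^ 2 / 2) • c) (x v : V) :
    fderiv ℝ f x v = -(a * inner ℝ x v) • f x := by
  rw [funext h, ((hasFDerivAt_exp_mul_norm_sq (-a) x).smul_const c).fderiv]
  simp [smul_smul]
  ring_nf

variable [FiniteDimensional ℝ V] [MeasurableSpace V] [BorelSpace V]

theorem norm_eq_of_eq_exp_smul {f : V → F} {a : ℝ} (ha : 0 < a) {c : F}
    (h : ∀ x, f x = Real.exp (-a * ‖x‖ ^ 2 / 2) • c) :
    ‖c‖ = (a / Real.pi) ^ ((Module.finrank ℝ V : ℝ) / 4) * √(∫ x, ‖f x‖ ^ 2) := by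
  have hint : ∫ x, ‖f x‖ ^ 2 =
      (Real.pi / a) ^ ((Module.finrank ℝ V : ℝ) / 2) * ‖c‖ ^ 2 := by
    rw [← GaussianFourier.integral_rexp_neg_mul_sq_norm ha, ← integral_mul_const]
    refine integral_congr_ae (.of_forall fun x => ?_)
    simp only [h, norm_smul, mul_pow, Real.norm_eq_abs, sq_abs, ← Real.exp_nat_mul]
    ring_nf
  have hpos : 0 < a / Real.pi := by positivity
  rw [hint, Real.sqrt_mul (by positivity), Real.sqrt_sq (norm_nonneg c), Real.sqrt_eq_rpow,
    ← Real.rpow_mul (by positivity), ← inv_div a Real.pi, Real.inv_rpow hpos.le, ← mul_assoc,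
    show (Module.finrank ℝ V : ℝ) / 2 * (1 / 2) = Module.finrank ℝ V / 4 by ring,
    mul_inv_cancel₀ (Real.rpow_pos_of_pos hpos _).ne', one_mul]

end Gaussian

/-- Characterization of the squeezed states: for a nonzero Schwartz function `φ`,
`n‖φ‖² = 2‖xφ‖‖∇φ‖` iff `‖∇φ‖ xφ = −‖xφ‖ ∇φ` iff `φ` is a Gaussian with
width `‖xφ‖/‖∇φ‖` up to a phase.  Here `nφ, nX, nD` are the `L²` norms of
`φ`, `xφ` and `∇φ`. -/
theorem stmt_15 (n : ℕ) (hn : 1 ≤ n)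
    (φ : SchwartzMap (EuclideanSpace ℝ (Fin n)) ℂ) (hφ : φ ≠ 0)
    (nφ nX nD : ℝ)
    (hnφ : nφ = Real.sqrt (∫ x, ‖φ x‖ ^ 2))
    (hnX : nX = Real.sqrt (∑ j, ∫ x, ‖(x j : ℂ) * φ x‖ ^ 2))
    (hnD : nD = Real.sqrt
        (∑ j, ∫ x, ‖fderiv ℝ (⇑φ) x (EuclideanSpace.single j 1)‖ ^ 2)) :
    List.TFAE
      [(n : ℝ) * nφ ^ 2 = 2 * (nX * nD),
        ∀ (x : EuclideanSpace ℝ (Fin n)) (j : Fin n),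
          (nD : ℂ) * ((x j : ℂ) * φ x)
            = -((nX : ℂ) * fderiv ℝ (⇑φ) x (EuclideanSpace.single j 1)),
        ∃ θ : ℝ, ∀ x : EuclideanSpace ℝ (Fin n),
          φ x = Complex.exp (θ * Complex.I) *
            (((nD / (Real.pi * nX)) ^ ((n : ℝ) / 4) : ℝ) : ℂ) * (nφ : ℂ) *
            Complex.exp (-((nD / nX : ℝ) : ℂ) * ((‖x‖ : ℂ) ^ 2) / 2)] := by
  set X : Fin n → 𝓢(EuclideanSpace ℝ (Fin n), ℂ) := fun j =>
    smulLeftCLM ℂ (EuclideanSpace.proj j : EuclideanSpace ℝ (Fin n) →L[ℝ] ℝ) φ with hX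
  set D : Fin n → 𝓢(EuclideanSpace ℝ (Fin n), ℂ) := fun j =>
    ∂_{(EuclideanSpace.single j 1 : EuclideanSpace ℝ (Fin n))} φ with hD
  have hXapp (j x) : X j x = (x j : ℂ) * φ x := by
    rw [hX, smulLeftCLM_apply_apply (ContinuousLinearMap.hasTemperateGrowth _)]
    simp
  have hDapp (j x) : D j x = fderiv ℝ φ x (EuclideanSpace.single j 1) :=
    lineDerivOp_apply_eq_fderiv _ _ _
  simp only [← hXapp] at hnX
  simp only [← hDapp] at hnD
  have hφ2 : nφ ^ 2 = ∫ x, ‖φ x‖ ^ 2 := by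
    rw [hnφ, Real.sq_sqrt (integral_nonneg fun x => sq_nonneg _)]
  have hX2 : nX ^ 2 = ∑ j, ∫ x, ‖X j x‖ ^ 2 := by
    rw [hnX, Real.sq_sqrt (Finset.sum_nonneg fun j _ => integral_nonneg fun x => sq_nonneg _)]
  have hD2 : nD ^ 2 = ∑ j, ∫ x, ‖D j x‖ ^ 2 := by
    rw [hnD, Real.sq_sqrt (Finset.sum_nonneg fun j _ => integral_nonneg fun x => sq_nonneg _)]
  have hcomm : 2 * ∑ j, ∫ x, inner ℝ (X j x) (D j x) = -(n * nφ ^ 2) := by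
    rw [Finset.mul_sum, hφ2]
    simp only [hX, hD, two_mul_integral_inner_smulLeftCLM_lineDerivOp]
    simp
  have hsum : ∑ j, ∫ x, ‖(nD • X j + nX • D j) x‖ ^ 2 =
      nX * nD * (2 * (nX * nD) - n * nφ ^ 2) := by
    simp only [integral_norm_smul_add_smul_sq, Finset.sum_add_distrib, ← Finset.mul_sum,
      ← hX2, ← hD2]
    linear_combination nD * nX * hcomm
  have hφpos : 0 < n * nφ ^ 2 := by
    have h1 : nφ ^ 2 ≠ 0 := by rwa [hφ2, ne_eq, integral_norm_sq_eq_zero_iff]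
    have h2 : 0 < nφ ^ 2 := lt_of_le_of_ne (sq_nonneg _) h1.symm
    have h3 : (0 : ℝ) < n := by exact_mod_cast hn
    positivity
  have hXpos : 0 < nX := by
    refine lt_of_le_of_ne (hnX ▸ Real.sqrt_nonneg _) fun h0 => ?_
    rw [← h0, zero_pow two_ne_zero, eq_comm, sum_integral_norm_sq_eq_zero_iff] at hX2
    simp only [hX2, zero_apply, inner_zero_left, integral_zero, Finset.sum_const_zero] at hcomm
    linarith
  have hDpos : 0 < nD := by
    refine lt_of_le_of_ne (hnD ▸ Real.sqrt_nonneg _) fun h0 => ?_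
    rw [← h0, zero_pow two_ne_zero, eq_comm, sum_integral_norm_sq_eq_zero_iff] at hD2
    simp only [hD2, zero_apply, inner_zero_right, integral_zero, Finset.sum_const_zero] at hcomm
    linarith
  have hcoord : (∀ (x : EuclideanSpace ℝ (Fin n)) (j : Fin n),
      (nD : ℂ) * ((x j : ℂ) * φ x)
        = -((nX : ℂ) * fderiv ℝ (⇑φ) x (EuclideanSpace.single j 1))) ↔
      ∀ x v, fderiv ℝ φ x v = -(nD / nX * inner ℝ x v) • φ x := by
    have hXne : (nX : ℂ) ≠ 0 := by exact_mod_cast hXpos.ne'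
    constructor
    · intro h x v
      have hj (j : Fin n) : fderiv ℝ φ x (EuclideanSpace.single j 1) =
          -(nD / nX * x j) • φ x := by
        have := h x j
        simp only [Complex.real_smul]
        push_cast
        field_simp
        linear_combination this
      have hv : v = ∑ j, v j • EuclideanSpace.single j (1 : ℝ) := by
        simpa using ((EuclideanSpace.basisFun (Fin n) ℝ).sum_repr v).symm
      conv_lhs => rw [hv]
      simp only [map_sum, map_smul, hj, smul_smul, ← Finset.sum_smul, PiLp.inner_apply,
        Finset.mul_sum, ← Finset.sum_neg_distrib]
      congr 1
      refine Finset.sum_congr rfl fun j _ => ?_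
      simp
      ring
    · intro h x j
      rw [h, Complex.real_smul]
      simp [EuclideanSpace.inner_single_right]
      field_simp
  have hpos : 0 < nD / nX := div_pos hDpos hXpos
  tfae_have 1 ↔ 2 := by
    have hiff : (n : ℝ) * nφ ^ 2 = 2 * (nX * nD) ↔
        ∑ j, ∫ x, ‖(nD • X j + nX • D j) x‖ ^ 2 = 0 := by
      rw [hsum, mul_eq_zero, or_iff_right (mul_pos hXpos hDpos).ne', sub_eq_zero, eq_comm]
    rw [hiff, sum_integral_norm_sq_eq_zero_iff, forall_comm]
    simp only [SchwartzMap.ext_iff, add_apply, smul_apply, zero_apply, hXapp, hDapp,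
      Complex.real_smul]
    simp only [add_eq_zero_iff_eq_neg]
  tfae_have 2 → 3 := by
    intro h
    have hexp := eq_exp_smul_of_fderiv_eq φ.differentiable (hcoord.mp h)
    refine ⟨(φ 0).arg, fun x => ?_⟩
    have hc := norm_eq_of_eq_exp_smul hpos hexp
    rw [finrank_euclideanSpace_fin, ← hnφ, div_div, mul_comm nX] at hc
    rw [hexp x, mul_assoc (Complex.exp _), ← Complex.ofReal_mul, ← hc, mul_comm (Complex.exp _),
      Complex.norm_mul_exp_arg_mul_I, Complex.real_smul, mul_comm]
    push_cast
    rfl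
  tfae_have 3 → 2 := by
    rintro ⟨θ, h⟩
    refine hcoord.mpr (fderiv_eq_of_eq_exp_smul (c := Complex.exp (θ * Complex.I) *
            (((nD / (Real.pi * nX)) ^ ((n : ℝ) / 4) : ℝ) : ℂ) * (nφ : ℂ)) fun x => ?_)
    rw [h x, Complex.real_smul, mul_comm]
    push_cast
    rfl
  tfae_finish
end

section
/- Let n ≥ 3 and let φ : ℝⁿ → ℂ be a smooth function with compact support contained in ℝⁿ \ {0}, with Aφ ≠ 0 and Bφ ≠ 0, where Aφ(x) = −i (x/|x|)·∇φ(x) − i((n−1)/(2|x|))φ(x) (the symmetrized radial derivative applied to φ) and Bφ(x) = φ(x)/|x| (the Coulomb potential applied to φ). Then: (1) ‖Bφ‖² = −2 Im (Aφ|Bφ) = ‖Aφ‖‖Bφ‖ (2 − ‖ Aφ/‖Aφ‖ + i Bφ/‖Bφ‖ ‖²); (2) ‖Aφ‖² = ‖∂_r φ‖² − ((n−1)(n−3)/4) ‖Bφ‖², where ∂_r φ = (x/|x|)·∇φ; and consequently (3) ‖φ/|x|‖ ≤ 2 ‖ ∂_r φ + ((n−1)/(2|x|)) φ ‖. -/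
open MeasureTheory

theorem EuclideanSpace.clm_apply_eq_sum {n : ℕ} {F : Type*} [NormedAddCommGroup F]
    [NormedSpace ℝ F] (L : EuclideanSpace ℝ (Fin n) →L[ℝ] F) (x : EuclideanSpace ℝ (Fin n)) :
    L x = ∑ j, x j • L (EuclideanSpace.single j 1) := by
  have h := congrArg L ((EuclideanSpace.basisFun (Fin n) ℝ).sum_repr x)
  rw [← h, map_sum]
  simp only [map_smul, EuclideanSpace.basisFun_repr, EuclideanSpace.basisFun_apply]

/-- The divergence theorem for the field `h(x) x`, with `h` of class `C¹` and compactly supported. -/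
theorem integral_fderiv_self_eq_neg_mul_integral {n : ℕ} {h : EuclideanSpace ℝ (Fin n) → ℝ}
    (hh : ContDiff ℝ 1 h) (hc : HasCompactSupport h) :
    ∫ x, fderiv ℝ h x x = -(n * ∫ x, h x) := by
  have hcoord (j : Fin n) : Differentiable ℝ fun x : EuclideanSpace ℝ (Fin n) => x j := by
    fun_prop
  have hderiv (j : Fin n) (x : EuclideanSpace ℝ (Fin n)) :
      fderiv ℝ (fun x : EuclideanSpace ℝ (Fin n) => x j) x (EuclideanSpace.single j 1) = 1 := by
    have : HasFDerivAt (fun x : EuclideanSpace ℝ (Fin n) => x j)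
        (EuclideanSpace.proj (𝕜 := ℝ) j) x := (EuclideanSpace.proj (𝕜 := ℝ) j).hasFDerivAt
    simp [this.fderiv]
  have hint : Integrable h := hh.continuous.integrable_of_hasCompactSupport hc
  have hfd : Continuous (fderiv ℝ h) := hh.continuous_fderiv one_ne_zero
  have hint' (j : Fin n) :
      Integrable fun x => x j * fderiv ℝ h x (EuclideanSpace.single j 1) := by
    refine Continuous.integrable_of_hasCompactSupport (by fun_prop) ?_
    exact (hc.fderiv_apply ℝ _).mul_left
  have hparts (j : Fin n) :
      ∫ x, x j * fderiv ℝ h x (EuclideanSpace.single j 1) = -∫ x, h x := by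
    rw [integral_mul_fderiv_eq_neg_fderiv_mul_of_integrable _ (hint' j) _
      (fun x _ => hcoord j x) (fun x _ => hh.differentiable one_ne_zero x)]
    · simp [hderiv]
    · simpa [hderiv] using hint
    · exact Continuous.integrable_of_hasCompactSupport
        ((hcoord j).continuous.mul hh.continuous) hc.mul_left
  have hsum (x : EuclideanSpace ℝ (Fin n)) :
      fderiv ℝ h x x = ∑ j, x j * fderiv ℝ h x (EuclideanSpace.single j 1) := EuclideanSpace.clm_apply_eq_sum _ x
  simp_rw [hsum]
  rw [integral_finsetSum _ fun j _ => hint' j]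
  simp [hparts]

section

variable {E F : Type*} [NormedAddCommGroup E] [InnerProductSpace ℝ E]
  [NormedAddCommGroup F] [NormedSpace ℝ F]

theorem contDiff_norm_inv_smul {φ : E → F} {k : WithTop ℕ∞} (hφ : ContDiff ℝ k φ) (h0 : 0 ∉ tsupport φ) :
    ContDiff ℝ k fun x => ‖x‖⁻¹ • φ x := by
  rw [contDiff_iff_contDiffAt]
  intro x
  rcases eq_or_ne x 0 with rfl | hx
  · have h : (fun x => ‖x‖⁻¹ • φ x) =ᶠ[nhds 0] fun _ => 0 := by
      filter_upwards [notMem_tsupport_iff_eventuallyEq.1 h0] with y hy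
      simp [hy]
    exact contDiffAt_const.congr_of_eventuallyEq h
  · exact ((contDiffAt_norm ℝ hx).inv (norm_ne_zero_iff.2 hx)).smul hφ.contDiffAt

theorem fderiv_norm_inv_smul_self {φ : E → F} {x : E} (hφ : DifferentiableAt ℝ φ x) (hx : x ≠ 0) :
    fderiv ℝ (fun x => ‖x‖⁻¹ • φ x) x x = ‖x‖⁻¹ • fderiv ℝ φ x x - ‖x‖⁻¹ • φ x := by
  have hn : DifferentiableAt ℝ (fun x : E => ‖x‖) x :=
    (contDiffAt_norm ℝ hx (n := 1)).differentiableAt one_ne_zero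
  have hx' : ‖x‖ ≠ 0 := norm_ne_zero_iff.2 hx
  have hi := (hasDerivAt_inv hx').comp_hasFDerivAt x hn.hasFDerivAt
  rw [HasFDerivAt.fderiv (f := fun x => ‖x‖⁻¹ • φ x) (hi.smul hφ.hasFDerivAt)]
  have : -((‖x‖ ^ 2)⁻¹ * ‖x‖) = -‖x‖⁻¹ := by field_simp
  simp [hn.fderiv_norm_self, this, sub_eq_add_neg]

end

/-- The `L²` expansion of a real linear combination of two functions. -/
theorem integral_norm_sq_real_linear_combination {α : Type*} [MeasurableSpace α] {μ : Measure α}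
    {f g : α → ℂ} (hf : Integrable (fun x => ‖f x‖ ^ 2) μ) (hg : Integrable (fun x => ‖g x‖ ^ 2) μ)
    (hfg : Integrable (fun x => inner ℝ (g x) (f x)) μ) (a b : ℝ) :
    ∫ x, ‖(a : ℂ) * f x + (b : ℂ) * g x‖ ^ 2 ∂μ =
      a ^ 2 * (∫ x, ‖f x‖ ^ 2 ∂μ) + 2 * a * b * (∫ x, inner ℝ (g x) (f x) ∂μ) +
        b ^ 2 * ∫ x, ‖g x‖ ^ 2 ∂μ := by
  have h (x : α) : ‖(a : ℂ) * f x + (b : ℂ) * g x‖ ^ 2 =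
      a ^ 2 * ‖f x‖ ^ 2 + 2 * a * b * inner ℝ (g x) (f x) + b ^ 2 * ‖g x‖ ^ 2 := by
    simp only [← Complex.normSq_eq_norm_sq, Complex.normSq_apply, Complex.inner]
    simp
    ring
  simp_rw [h]
  rw [integral_add (by exact (hf.const_mul _).add (hfg.const_mul _)) (hg.const_mul _),
    integral_add (hf.const_mul _) (hfg.const_mul _)]
  simp only [integral_const_mul]

/-- Uncertainty relation between the symmetrized radial derivative
`Aφ = −i(x/|x|)·∇φ − i((n−1)/(2|x|))φ` and the Coulomb potential `Bφ = φ/|x|`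
for `n ≥ 3` and a smooth `φ` compactly supported in `ℝⁿ \ {0}`.  Here
`R = ∂_r φ = (x/|x|)·∇φ`, `nA, nB` are the `L²` norms of `Aφ`, `Bφ`, and the
scalar product `(f|g) = ∫ f conj g` is linear in the first variable. -/
theorem stmt_19 (n : ℕ) (hn : 3 ≤ n)
    (φ : EuclideanSpace ℝ (Fin n) → ℂ)
    (hφ : ContDiff ℝ (⊤ : ℕ∞) φ) (hsupp : HasCompactSupport φ)
    (h0 : 0 ∉ tsupport φ)
    (R A B : EuclideanSpace ℝ (Fin n) → ℂ)
    (hR : R = fun x =>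
      ∑ j, ((x j / ‖x‖ : ℝ) : ℂ) * fderiv ℝ φ x (EuclideanSpace.single j 1))
    (hA : A = fun x =>
      -Complex.I * R x - Complex.I * ((((n : ℝ) - 1) / (2 * ‖x‖) : ℝ) : ℂ) * φ x)
    (hB : B = fun x => φ x / (‖x‖ : ℂ))
    (hA0 : A ≠ 0) (hB0 : B ≠ 0)
    (nA nB : ℝ)
    (hnA : nA = Real.sqrt (∫ x, ‖A x‖ ^ 2))
    (hnB : nB = Real.sqrt (∫ x, ‖B x‖ ^ 2)) :
    (∫ x, ‖B x‖ ^ 2 = -2 * (∫ x, A x * (starRingEnd ℂ) (B x)).im ∧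
      ∫ x, ‖B x‖ ^ 2
        = nA * nB *
          (2 - ∫ x, ‖(nA : ℂ)⁻¹ * A x + Complex.I * ((nB : ℂ)⁻¹ * B x)‖ ^ 2)) ∧
    nA ^ 2 = (∫ x, ‖R x‖ ^ 2) - ((n : ℝ) - 1) * ((n : ℝ) - 3) / 4 * nB ^ 2 ∧
    nB ≤ 2 * Real.sqrt
        (∫ x, ‖R x + ((((n : ℝ) - 1) / (2 * ‖x‖) : ℝ) : ℂ) * φ x‖ ^ 2) := by
  have hB' : B = fun x => ‖x‖⁻¹ • φ x := by
    subst hB; funext x; simp [div_eq_inv_mul]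
  have hR' (x : EuclideanSpace ℝ (Fin n)) : R x = ‖x‖⁻¹ • fderiv ℝ φ x x := by
    rw [EuclideanSpace.clm_apply_eq_sum, hR]
    simp [Finset.mul_sum, div_eq_inv_mul, mul_assoc]
  have hφ1 : ContDiff ℝ 1 φ := hφ.of_le (by simp)
  have hBsmooth : ContDiff ℝ 1 B := by
    have h := contDiff_norm_inv_smul hφ1 h0
    rwa [← hB'] at h
  have hBsupp : HasCompactSupport B := by
    refine hsupp.mono fun x hx hx' => hx ?_
    simp [hB', hx']
  have hRB (x : EuclideanSpace ℝ (Fin n)) : R x = fderiv ℝ B x x + B x := by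
    rcases eq_or_ne x 0 with rfl | hx
    · simp [hR', hB']
    · rw [hB', fderiv_norm_inv_smul_self (hφ.differentiable (by simp) x) hx, hR' x]
      simp
  have hBcont := hBsmooth.continuous
  have hRcont : Continuous R := by
    have := hBsmooth.continuous_fderiv one_ne_zero
    rw [funext hRB]
    fun_prop
  have hRsupp : HasCompactSupport R := by
    rw [funext hRB]
    refine HasCompactSupport.add (HasCompactSupport.mono (hBsupp.fderiv ℝ) ?_) hBsupp
    intro x hx hx'
    simp [hx'] at hx
  have hIR : Integrable fun x => ‖R x‖ ^ 2 :=
    Continuous.integrable_of_hasCompactSupport (by fun_prop)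
      (hRsupp.comp_left (g := fun z => ‖z‖ ^ 2) (by simp))
  have hIB : Integrable fun x => ‖B x‖ ^ 2 :=
    Continuous.integrable_of_hasCompactSupport (by fun_prop)
      (hBsupp.comp_left (g := fun z => ‖z‖ ^ 2) (by simp))
  have hIRB : Integrable fun x => inner ℝ (B x) (R x) := by
    refine Continuous.integrable_of_hasCompactSupport (by fun_prop) (hBsupp.mono ?_)
    intro x hx hx'
    simp [hx'] at hx
  have hcross : 2 * ∫ x, inner ℝ (B x) (R x) = -((n : ℝ) - 2) * ∫ x, ‖B x‖ ^ 2 := by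
    have h := integral_fderiv_self_eq_neg_mul_integral (hBsmooth.norm_sq ℝ)
      (hBsupp.comp_left (g := fun z => ‖z‖ ^ 2) (by simp))
    have h' (x : EuclideanSpace ℝ (Fin n)) : fderiv ℝ (fun x => ‖B x‖ ^ 2) x x =
        2 * inner ℝ (B x) (R x) - 2 * ‖B x‖ ^ 2 := by
      rw [(hBsmooth.differentiable one_ne_zero x).hasFDerivAt.norm_sq.fderiv, hRB,
        inner_add_right, real_inner_self_eq_norm_sq]
      simp
      ring
    simp_rw [h'] at h
    rw [integral_sub (hIRB.const_mul _) (hIB.const_mul _), integral_const_mul,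
      integral_const_mul] at h
    linarith
  have hsq := integral_norm_sq_real_linear_combination hIR hIB hIRB
  set P := ∫ x, ‖R x‖ ^ 2
  set Q := ∫ x, ‖B x‖ ^ 2
  set T := ∫ x, inner ℝ (B x) (R x)
  have hQ : 0 ≤ Q := integral_nonneg fun x => by positivity
  obtain ⟨c, hc⟩ : ∃ c : ℝ, c = ((n : ℝ) - 1) / 2 := ⟨_, rfl⟩
  have hcB (x : EuclideanSpace ℝ (Fin n)) :
      ((((n : ℝ) - 1) / (2 * ‖x‖) : ℝ) : ℂ) * φ x = c * B x := by
    rw [hB, hc]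
    push_cast
    simp only [div_eq_mul_inv, mul_inv]
    ring
  have hAB (x : EuclideanSpace ℝ (Fin n)) : A x = -Complex.I * (R x + c * B x) := by
    rw [hA]
    simp only [mul_assoc, hcB]
    ring
  have hnormA (x : EuclideanSpace ℝ (Fin n)) : ‖A x‖ = ‖R x + c * B x‖ := by
    simp [hAB]
  have hRc : ∫ x, ‖R x + c * B x‖ ^ 2 = P + 2 * c * T + c ^ 2 * Q := by
    simpa using hsq 1 c
  have him : (∫ x, A x * (starRingEnd ℂ) (B x)).im = -(T + c * Q) := by
    have hI : Integrable fun x => A x * (starRingEnd ℂ) (B x) := by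
      refine Continuous.integrable_of_hasCompactSupport ?_ (hBsupp.mono ?_)
      · rw [funext hAB]
        fun_prop
      · intro x hx hx'
        simp [hx'] at hx
    have h (x : EuclideanSpace ℝ (Fin n)) : (A x * (starRingEnd ℂ) (B x)).im =
        -(inner ℝ (B x) (R x) + c * ‖B x‖ ^ 2) := by
      rw [hAB, ← Complex.normSq_eq_norm_sq, Complex.normSq_apply, Complex.inner]
      simp
      ring
    rw [← RCLike.im_eq_complex_im, ← integral_im hI]
    simp only [RCLike.im_eq_complex_im, h]
    rw [integral_neg, integral_add hIRB (hIB.const_mul _), integral_const_mul]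
  have hnA2 : nA ^ 2 = P + 2 * c * T + c ^ 2 * Q := by
    rw [hnA, Real.sq_sqrt (integral_nonneg fun x => by positivity), ← hRc]
    simp only [hnormA]
  have hnB2 : nB ^ 2 = Q := by rw [hnB, Real.sq_sqrt hQ]
  have hnA0 : 0 ≤ nA := hnA ▸ Real.sqrt_nonneg _
  have hnB0 : 0 ≤ nB := hnB ▸ Real.sqrt_nonneg _
  have hbound : nB ≤ 2 * nA := by
    have h : 0 ≤ ∫ x, ‖((1 : ℝ) : ℂ) * R x + ((c - 1 / 2 : ℝ) : ℂ) * B x‖ ^ 2 :=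
      integral_nonneg fun x => by positivity
    rw [hsq] at h
    refine abs_le_of_sq_le_sq' ?_ (by positivity) |>.2
    subst hc
    nlinarith
  refine ⟨⟨?_, ?_⟩, ?_, ?_⟩
  · rw [him, hc]
    linarith
  · rcases hnB0.eq_or_lt with hB | hB
    · rw [← hnB2, ← hB]
      simp
    · have hA : 0 < nA := by linarith
      have h (x : EuclideanSpace ℝ (Fin n)) :
          ‖(nA : ℂ)⁻¹ * A x + Complex.I * ((nB : ℂ)⁻¹ * B x)‖ =
            ‖((nA⁻¹ : ℝ) : ℂ) * R x + ((c * nA⁻¹ - nB⁻¹ : ℝ) : ℂ) * B x‖ := by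
        rw [← one_mul ‖((nA⁻¹ : ℝ) : ℂ) * R x + _‖, ← Complex.norm_I, ← norm_neg Complex.I,
          ← norm_mul, hAB]
        congr 1
        push_cast
        ring
      simp_rw [h]
      rw [hsq]
      have hT : 2 * T = (1 - 2 * c) * Q := by rw [hcross, hc]; ring
      have hT' : T = (1 - 2 * c) * Q / 2 := by linarith
      have hP : P = nA ^ 2 - 2 * c * T - c ^ 2 * Q := by linarith
      rw [hP, hT', ← hnB2]
      field_simp
      ring
  · rw [hnA2, hnB2, hc]
    linear_combination ((n : ℝ) - 1) / 2 * hcross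
  · simp only [hcB]
    simp only [← hnormA]
    rwa [← hnA]
end
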